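/- arXiv:2105.15069 — 2 statements merged into one kernel-verified Lean document; each statement's English description precedes it below -/
import Mathlib

section
/- If L is symmetric (L y y' = L y' y for all y, y'), then for every v : Y → ℝ the Fenchel conjugate of the negative Max-Margin Bayes risk satisfies F_M(v) = sup_{q ∈ Δ} (⟨v, q⟩ + H_M(q)) = max_{y, y' ∈ Y} ( L y y' + (v y + v y') / 2 ). -/
open Finset Set

variable {Y : Type*} [Fintype Y] [DecidableEq Y] [Nonempty Y]

/-- Probability simplex over `Y`. -/
def simplexSet (Y : Type*) [Fintype Y] : Set (Y → ℝ) :=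
  {q | (∀ y, 0 ≤ q y) ∧ ∑ y, q y = 1}

/-- Bayes risk of the discrete loss `L`. -/
noncomputable def HL (L : Y → Y → ℝ) (q : Y → ℝ) : ℝ :=
  ⨅ y : Y, ∑ y', L y y' * q y'

/-- Optimal-label set. -/
noncomputable def ystar (L : Y → Y → ℝ) (q : Y → ℝ) : Set Y :=
  {y | ∑ y', L y y' * q y' = HL L q}

/-- Prediction set of label `y`. -/
noncomputable def predSet (L : Y → Y → ℝ) (y : Y) : Set (Y → ℝ) :=
  {q ∈ simplexSet Y | y ∈ ystar L q}

/-- Max-Margin loss. -/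
noncomputable def SM (L : Y → Y → ℝ) (v : Y → ℝ) (y : Y) : ℝ :=
  ⨆ y' : Y, (L y y' + v y' - v y)

/-- Bayes risk of the Max-Margin loss. -/
noncomputable def HM (L : Y → Y → ℝ) (q : Y → ℝ) : ℝ :=
  ⨅ v : Y → ℝ, ∑ y, q y * SM L v y

/-- Conditional-risk minimizers of the Max-Margin loss. -/
noncomputable def vstarM (L : Y → Y → ℝ) (q : Y → ℝ) : Set (Y → ℝ) :=
  {v | ∑ y, q y * SM L v y = HM L q}

/-- Restricted-Max-Margin loss. -/
noncomputable def SRM (L : Y → Y → ℝ) (v : Y → ℝ) (y : Y) : ℝ :=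
  sSup ((fun q => ∑ y', L y y' * q y' + ∑ z, v z * q z) '' predSet L y) - v y

/-- Bayes risk of the Restricted-Max-Margin loss. -/
noncomputable def HRM (L : Y → Y → ℝ) (q : Y → ℝ) : ℝ :=
  ⨅ v : Y → ℝ, ∑ y, q y * SRM L v y

/-- Conditional-risk minimizers of the Restricted-Max-Margin loss. -/
noncomputable def vstarRM (L : Y → Y → ℝ) (q : Y → ℝ) : Set (Y → ℝ) :=
  {v | ∑ y, q y * SRM L v y = HRM L q}

/-- Max-Min-Margin loss. -/
noncomputable def SMM (L : Y → Y → ℝ) (v : Y → ℝ) (y : Y) : ℝ :=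
  sSup ((fun q => (⨅ z : Y, ∑ y', L z y' * q y') + ∑ z, v z * q z) '' simplexSet Y) - v y

/-- Bayes risk of the Max-Min-Margin loss. -/
noncomputable def HMM (L : Y → Y → ℝ) (q : Y → ℝ) : ℝ :=
  ⨅ v : Y → ℝ, ∑ y, q y * SMM L v y

/-- Transportation polytope `U(q, q)`. -/
def Upoly (q : Y → ℝ) : Set (Y → Y → ℝ) :=
  {Q | (∀ y y', 0 ≤ Q y y') ∧ (∀ y, ∑ y', Q y y' = q y) ∧ (∀ y', ∑ y, Q y y' = q y')}

/-- The constraint set `C_L`. -/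
def CL (L : Y → Y → ℝ) : Set (Y → Y → ℝ) :=
  {Q | ∀ y z : Y, ∑ y', L y y' * Q y y' ≤ ∑ y', L z y' * Q y y'}

/-!
Testing the Bayes risk at the score `v / 2` turns `v y + SM L (v / 2) y` into the maximum over `y'`
of `L y y' + (v y + v y') / 2`, which bounds the conjugate from above. Conversely, put mass `1 / 2`
on each label of a maximizing pair `(a, b)`: in the sum of the two margin terms `L a b + u b - u a`
and `L b a + u a - u b` the score `u` cancels, so the Bayes risk there is at least the average of
`L a b` and `L b a`, which is `L a b` by symmetry.
-/

section MaxMargin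

variable {Y : Type*}

lemma le_SM [Finite Y] (L : Y → Y → ℝ) (v : Y → ℝ) (y y' : Y) : L y y' + v y' - v y ≤ SM L v y :=
  le_ciSup (f := fun z ↦ L y z + v z - v y) (Set.finite_range _).bddAbove y'

lemma self_le_SM [Finite Y] (L : Y → Y → ℝ) (v : Y → ℝ) (y : Y) : L y y ≤ SM L v y := by
  simpa only [add_sub_cancel_right] using le_SM L v y y

lemma add_SM_div_two_le {L : Y → Y → ℝ} {v : Y → ℝ} {M : ℝ} {y : Y}
    (hM : ∀ y', L y y' + (v y + v y') / 2 ≤ M) :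
    v y + SM L (fun z ↦ v z / 2) y ≤ M := by
  have : Nonempty Y := ⟨y⟩
  have hSM : SM L (fun z ↦ v z / 2) y ≤ M - v y := ciSup_le fun y' ↦ by linarith [hM y']
  linarith

variable [Fintype Y]

lemma HM_le_sum_SM (L : Y → Y → ℝ) {q : Y → ℝ} (hq : ∀ y, 0 ≤ q y) (v : Y → ℝ) :
    HM L q ≤ ∑ y, q y * SM L v y := by
  have hbdd : BddBelow (range fun u : Y → ℝ ↦ ∑ y, q y * SM L u y) := by
    refine ⟨∑ y, q y * L y y, ?_⟩
    rintro _ ⟨u, rfl⟩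
    exact sum_le_sum fun y _ ↦ mul_le_mul_of_nonneg_left (self_le_SM L u y) (hq y)
  exact ciInf_le hbdd v

lemma sum_mul_le_of_mem_simplexSet {q f : Y → ℝ} {M : ℝ} (hq : q ∈ simplexSet Y)
    (hf : ∀ y, f y ≤ M) : ∑ y, q y * f y ≤ M :=
  calc ∑ y, q y * f y ≤ ∑ y, q y * M :=
        sum_le_sum fun y _ ↦ mul_le_mul_of_nonneg_left (hf y) (hq.1 y)
    _ = M := by rw [← sum_mul, hq.2, one_mul]

lemma sum_mul_add_HM_le {L : Y → Y → ℝ} {v q : Y → ℝ} {M : ℝ} (hq : q ∈ simplexSet Y)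
    (hM : ∀ y y', L y y' + (v y + v y') / 2 ≤ M) :
    ∑ y, v y * q y + HM L q ≤ M :=
  calc ∑ y, v y * q y + HM L q
      ≤ ∑ y, v y * q y + ∑ y, q y * SM L (fun z ↦ v z / 2) y := by
        gcongr
        exact HM_le_sum_SM L hq.1 _
    _ = ∑ y, q y * (v y + SM L (fun z ↦ v z / 2) y) := by
        simp only [mul_add, sum_add_distrib, mul_comm (v _)]
    _ ≤ M := sum_mul_le_of_mem_simplexSet hq fun y ↦ add_SM_div_two_le (hM y)

end MaxMargin

section EdgeMidpoint

variable {Y : Type*} [DecidableEq Y]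

/-- The uniform distribution on the labels `a` and `b`, encoded as the midpoint of the edge of the
simplex joining the two point masses, so that it is the point mass at `a` when `a = b`. For a
symmetric loss, distributions of this form maximize the conjugate objective. -/
noncomputable def edgeMidpoint (a b : Y) : Y → ℝ :=
  midpoint ℝ (Pi.single a 1) (Pi.single b 1)

variable [Fintype Y]

lemma edgeMidpoint_mem_simplexSet (a b : Y) : edgeMidpoint a b ∈ simplexSet Y :=
  (convex_stdSimplex ℝ Y).midpoint_mem (single_mem_stdSimplex ℝ a) (single_mem_stdSimplex ℝ b)

lemma sum_edgeMidpoint_mul (a b : Y) (f : Y → ℝ) :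
    ∑ y, edgeMidpoint a b y * f y = (f a + f b) / 2 := by
  change edgeMidpoint a b ⬝ᵥ f = _
  rw [edgeMidpoint, midpoint_eq_smul_add, smul_dotProduct, add_dotProduct, single_one_dotProduct,
    single_one_dotProduct, smul_eq_mul, invOf_eq_inv, inv_mul_eq_div]

lemma average_loss_le_HM_edgeMidpoint (L : Y → Y → ℝ) (a b : Y) :
    (L a b + L b a) / 2 ≤ HM L (edgeMidpoint a b) := by
  refine le_ciInf fun u ↦ ?_
  rw [sum_edgeMidpoint_mul]
  linarith [le_SM L u a b, le_SM L u b a]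

end EdgeMidpoint

theorem stmt15_general {Y : Type*} [Fintype Y] [Nonempty Y] (L : Y → Y → ℝ)
    (hsymm : ∀ y y', L y y' = L y' y) (v : Y → ℝ) :
    IsGreatest ((fun q ↦ (∑ z, v z * q z) + HM L q) '' simplexSet Y)
      (⨆ p : Y × Y, (L p.1 p.2 + (v p.1 + v p.2) / 2)) := by
  classical
  set g : Y × Y → ℝ := fun p ↦ L p.1 p.2 + (v p.1 + v p.2) / 2
  have hupper : ∀ q ∈ simplexSet Y, ∑ z, v z * q z + HM L q ≤ ⨆ p, g p := fun q hq ↦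
    sum_mul_add_HM_le hq fun y y' ↦ le_ciSup (Set.finite_range g).bddAbove (y, y')
  obtain ⟨⟨a, b⟩, hmax⟩ : ∃ p, g p = ⨆ p, g p := exists_eq_ciSup_of_finite
  have hmem := edgeMidpoint_mem_simplexSet a b
  have hlower : ⨆ p, g p ≤ ∑ z, v z * edgeMidpoint a b z + HM L (edgeMidpoint a b) := by
    simp only [← hmax, g, mul_comm (v _), sum_edgeMidpoint_mul]
    linarith [average_loss_le_HM_edgeMidpoint L a b, hsymm a b]
  exact ⟨⟨_, hmem, (hupper _ hmem).antisymm hlower⟩, forall_mem_image.2 hupper⟩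

theorem stmt15 (Y : Type*) [Fintype Y] [DecidableEq Y] [Nonempty Y] (L : Y → Y → ℝ)
    (hcard : 2 ≤ Fintype.card Y)
    (hnonneg : ∀ y y', 0 ≤ L y y')
    (hzero : ∀ y y', L y y' = 0 ↔ y = y')
    (hsymm : ∀ y y', L y y' = L y' y)
    (v : Y → ℝ) :
    sSup ((fun q => (∑ z, v z * q z) + HM L q) '' simplexSet Y) =
    ⨆ p : Y × Y, (L p.1 p.2 + (v p.1 + v p.2) / 2) :=
  (stmt15_general L hsymm v).csSup_eq
end

section
/- Suppose that for every y ∈ Y and every extreme point q of the prediction set Δ(y), the rank-one matrix q q^T (the matrix (y', y'') ↦ q y' · q y'') belongs to C_L. Then H_RM(q) = H_L(q) for all q ∈ Δ. -/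
open Finset Set

variable {Y : Type*} [Fintype Y] [DecidableEq Y] [Nonempty Y]

/-!
For the upper bound, the score `v = -L z` gives `S_RM(v, y) ≤ L z y`, since `⟨L_y, p⟩ ≤ ⟨L_z, p⟩`
for every `p ∈ Δ(y)`; averaging over `q` with `z` optimal for `q` gives `H_L(q)`.

For the lower bound, fix a score `v`. If `p pᵀ ∈ C_L`, then `p ∈ Δ(y)` for every label `y` it
charges, so `p` is a competitor in the maximum defining `S_RM(v, y)`, and the `v`-terms cancel on
averaging over `p`: the conditional risk of `v` at `p` is at least `H_L(p)`. By hypothesis this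
holds at the extreme points of each `Δ(y)`. On `Δ(y)` the Bayes risk `H_L` is the linear function
`⟨L_y, ·⟩`, and the conditional risk is linear too, so the inequality spreads to `Δ(y)` by
Krein–Milman, and the sets `Δ(y)` cover the simplex.
-/

section Convexity

theorem subset_of_extremePoints_subset {E : Type*} [AddCommGroup E] [Module ℝ E]
    [TopologicalSpace E] [T2Space E] [IsTopologicalAddGroup E] [ContinuousSMul ℝ E]
    [LocallyConvexSpace ℝ E] {K C : Set E} (hK : IsCompact K) (hKconv : Convex ℝ K)
    (hC : IsClosed C) (hCconv : Convex ℝ C) (h : extremePoints ℝ K ⊆ C) : K ⊆ C := by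
  rw [← closure_convexHull_extremePoints hK hKconv]
  exact closure_minimal (convexHull_min h hCconv) hC

omit [DecidableEq Y] [Nonempty Y]

theorem isClosed_setOf_sum_mul_le (c d : Y → ℝ) :
    IsClosed {q : Y → ℝ | ∑ y, c y * q y ≤ ∑ y, d y * q y} :=
  isClosed_le (by fun_prop) (by fun_prop)

theorem convex_setOf_sum_mul_le (c d : Y → ℝ) :
    Convex ℝ {q : Y → ℝ | ∑ y, c y * q y ≤ ∑ y, d y * q y} := by
  simpa [dotProduct, sub_mul] using
    convex_halfSpace_le (dotProductBilin ℝ ℝ (c - d)).isLinear 0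

end Convexity

section PredictionSet

variable {L : Y → Y → ℝ} {q : Y → ℝ} {y : Y}

omit [DecidableEq Y]

theorem mem_ystar_iff : y ∈ ystar L q ↔ ∀ z, ∑ y', L y y' * q y' ≤ ∑ y', L z y' * q y' := by
  have hbdd : BddBelow (Set.range fun z => ∑ y', L z y' * q y') := (Set.finite_range _).bddBelow
  exact ⟨fun h z => (show _ = HL L q from h).trans_le (ciInf_le hbdd z),
    fun h => le_antisymm (le_ciInf h) (ciInf_le hbdd y)⟩

theorem exists_mem_ystar (L : Y → Y → ℝ) (q : Y → ℝ) : ∃ y, y ∈ ystar L q :=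
  exists_eq_ciInf_of_finite (f := fun z => ∑ y', L z y' * q y')

theorem predSet_eq_stdSimplex_inter (L : Y → Y → ℝ) (y : Y) :
    predSet L y =
      stdSimplex ℝ Y ∩ ⋂ z, {q | ∑ y', L y y' * q y' ≤ ∑ y', L z y' * q y'} := by
  ext q
  simp only [predSet, mem_ystar_iff, Set.mem_inter_iff, Set.mem_iInter, Set.mem_ofPred_eq]
  rfl

theorem isCompact_predSet (L : Y → Y → ℝ) (y : Y) : IsCompact (predSet L y) := by
  rw [predSet_eq_stdSimplex_inter]
  exact (isCompact_stdSimplex ℝ Y).inter_right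
    (isClosed_iInter fun z => isClosed_setOf_sum_mul_le (L y) (L z))

theorem convex_predSet (L : Y → Y → ℝ) (y : Y) : Convex ℝ (predSet L y) := by
  rw [predSet_eq_stdSimplex_inter]
  exact (convex_stdSimplex ℝ Y).inter
    (convex_iInter fun z => convex_setOf_sum_mul_le (L y) (L z))

theorem support_subset_ystar_of_mul_mem_CL (hq : 0 ≤ q) (h : (fun a b => q a * q b) ∈ CL L) :
    Function.support q ⊆ ystar L q := by
  intro y hy
  refine mem_ystar_iff.2 fun z => le_of_mul_le_mul_left ?_ ((hq y).lt_of_ne' hy)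
  simpa only [Finset.mul_sum, mul_left_comm] using h y z

end PredictionSet

theorem single_mem_predSet {L : Y → Y → ℝ} {y : Y} (h : ∀ z, L y y ≤ L z y) :
    Pi.single y 1 ∈ predSet L y :=
  ⟨single_mem_stdSimplex ℝ y, mem_ystar_iff.2 fun z => by simpa [Pi.single_apply] using h z⟩

section RestrictedMaxMargin

variable {L : Y → Y → ℝ} {q : Y → ℝ} {y : Y}

omit [DecidableEq Y]

theorem HL_add_sub_le_SRM (hq : q ∈ predSet L y) (v : Y → ℝ) :
    HL L q + ∑ z, v z * q z - v y ≤ SRM L v y := by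
  have hbdd : BddAbove ((fun p => ∑ y', L y y' * p y' + ∑ z, v z * p z) '' predSet L y) :=
    (isCompact_predSet L y).bddAbove_image (by fun_prop)
  rw [← show ∑ y', L y y' * q y' = HL L q from hq.2]
  exact sub_le_sub_right (le_csSup hbdd (Set.mem_image_of_mem _ hq)) _

theorem SRM_neg_le (hne : (predSet L y).Nonempty) (z : Y) : SRM L (-L z) y ≤ L z y := by
  have hsup :
      sSup ((fun p => ∑ y', L y y' * p y' + ∑ y', (-L z) y' * p y') '' predSet L y) ≤ 0 := by
    refine csSup_le (hne.image _) (Set.forall_mem_image.2 fun p hp => ?_)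
    simpa using mem_ystar_iff.1 hp.2 z
  simpa [SRM] using hsup

theorem exists_sum_mul_SRM_le_HL (hne : ∀ y, (predSet L y).Nonempty) (hq : 0 ≤ q) :
    ∃ v, ∑ y, q y * SRM L v y ≤ HL L q := by
  obtain ⟨z, hz⟩ := exists_mem_ystar L q
  refine ⟨-L z, ?_⟩
  calc ∑ y, q y * SRM L (-L z) y
    _ ≤ ∑ y, q y * L z y :=
        Finset.sum_le_sum fun y _ => mul_le_mul_of_nonneg_left (SRM_neg_le (hne y) z) (hq y)
    _ = ∑ y, L z y * q y := by simp only [mul_comm]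
    _ = HL L q := hz

theorem HL_le_sum_mul_SRM_of_support_subset (hq : q ∈ simplexSet Y)
    (hsupp : Function.support q ⊆ ystar L q) (v : Y → ℝ) :
    HL L q ≤ ∑ y, q y * SRM L v y := by
  calc HL L q
    _ = ∑ y, q y * (HL L q + ∑ z, v z * q z - v y) := by
        simp only [mul_sub, Finset.sum_sub_distrib, ← Finset.sum_mul, hq.2, mul_comm (v _)]
        ring
    _ ≤ ∑ y, q y * SRM L v y := by
        refine Finset.sum_le_sum fun y _ => ?_
        by_cases hy : q y = 0
        · simp only [hy, zero_mul, le_refl]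
        · exact mul_le_mul_of_nonneg_left (HL_add_sub_le_SRM ⟨hq, hsupp hy⟩ v) (hq.1 y)

theorem HL_le_sum_mul_SRM_of_forall_extremePoints (v : Y → ℝ)
    (hext : ∀ p ∈ extremePoints ℝ (predSet L y), HL L p ≤ ∑ z, p z * SRM L v z)
    (hq : q ∈ predSet L y) : HL L q ≤ ∑ z, q z * SRM L v z := by
  have hiff {p : Y → ℝ} (hp : p ∈ predSet L y) :
      HL L p ≤ ∑ z, p z * SRM L v z ↔ ∑ z, L y z * p z ≤ ∑ z, SRM L v z * p z := by
    rw [show ∑ z, L y z * p z = HL L p from hp.2]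
    simp only [mul_comm]
  have hsub : predSet L y ⊆ {p | ∑ z, L y z * p z ≤ ∑ z, SRM L v z * p z} :=
    subset_of_extremePoints_subset (isCompact_predSet L y) (convex_predSet L y)
      (isClosed_setOf_sum_mul_le _ _) (convex_setOf_sum_mul_le _ _)
      fun p hp => (hiff hp.1).1 (hext p hp)
  exact (hiff hq).2 (hsub hq)

theorem HL_le_sum_mul_SRM
    (hext : ∀ y, ∀ p ∈ extremePoints ℝ (predSet L y), (fun a b => p a * p b) ∈ CL L)
    (hq : q ∈ simplexSet Y) (v : Y → ℝ) : HL L q ≤ ∑ y, q y * SRM L v y := by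
  obtain ⟨y, hy⟩ := exists_mem_ystar L q
  refine HL_le_sum_mul_SRM_of_forall_extremePoints v (fun p hp => ?_) ⟨hq, hy⟩
  have hp_simplex : p ∈ simplexSet Y := hp.1.1
  exact HL_le_sum_mul_SRM_of_support_subset hp_simplex
    (support_subset_ystar_of_mul_mem_CL hp_simplex.1 (hext y p hp)) v

end RestrictedMaxMargin

-- Pitfall: on an empty prediction set the supremum in `SRM` is `sSup ∅ = 0` rather than `-∞`.
theorem stmt18_general {Y : Type*} [Fintype Y] [Nonempty Y] (L : Y → Y → ℝ)
    (hne : ∀ y, (predSet L y).Nonempty)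
    (hext : ∀ y, ∀ q ∈ extremePoints ℝ (predSet L y), (fun a b => q a * q b) ∈ CL L) :
    ∀ q ∈ simplexSet Y, HRM L q = HL L q := by
  intro q hq
  have hlower := HL_le_sum_mul_SRM hext hq
  obtain ⟨v, hupper⟩ := exists_sum_mul_SRM_le_HL hne hq.1
  have hbdd : BddBelow (Set.range fun v => ∑ y, q y * SRM L v y) :=
    ⟨HL L q, Set.forall_mem_range.2 hlower⟩
  exact le_antisymm ((ciInf_le hbdd v).trans hupper) (le_ciInf hlower)

theorem stmt18 (Y : Type*) [Fintype Y] [DecidableEq Y] [Nonempty Y] (L : Y → Y → ℝ)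
    (hcard : 2 ≤ Fintype.card Y)
    (hnonneg : ∀ y y', 0 ≤ L y y')
    (hzero : ∀ y y', L y y' = 0 ↔ y = y')
    (hext : ∀ y : Y, ∀ q ∈ Set.extremePoints ℝ (predSet L y),
      (fun a b => q a * q b) ∈ CL L) :
    ∀ q ∈ simplexSet Y, HRM L q = HL L q :=
  stmt18_general L
    (fun y => ⟨_, single_mem_predSet fun z => ((hzero y y).2 rfl).trans_le (hnonneg z y)⟩) hext
end
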